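/- arXiv:1901.01993 — 3 statements merged into one kernel-verified Lean document; each statement's English description precedes it below -/
import Mathlib

section
/- Let M ≥ 6 be an even integer and let a, b be integers with 1 ≤ a < b < M/2 and gcd(a,M) = gcd(b,M) = 1. Then for every integer n ≥ 0 and every integer m with 1 ≤ m ≤ Mn + M/2, the number of partitions of Mn + M/2 into exactly m distinct parts, each part congruent to a or M−a modulo M, is greater than or equal to the number of partitions of Mn + M/2 into exactly m distinct parts, each part congruent to b or M−b modulo M. (This is part (ii) of the second main theorem, equivalently Corollary 2(ii).) -/
def Pset (r s : ℕ) (T : ℤ) : Set (Finset ℕ × Finset ℕ) :=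
  {p | p.1.card = r ∧ p.2.card = s ∧ ((∑ k ∈ p.1, k + ∑ k ∈ p.2, k : ℕ) : ℤ) = T}

theorem Pset_finite (r s : ℕ) (T : ℤ) : (Pset r s T).Finite := by
  apply Set.Finite.subset (Finset.finite_toSet
    ((Finset.range (T.toNat + 1)).powerset ×ˢ (Finset.range (T.toNat + 1)).powerset))
  rintro ⟨K, L⟩ ⟨-, -, h⟩
  simp only [Finset.coe_product, Set.mem_prod, Finset.mem_coe, Finset.mem_powerset]
  simp only at h
  constructor
  · intro x hx
    have : x ≤ ∑ k ∈ K, k := Finset.single_le_sum (f := fun k => k) (fun _ _ => Nat.zero_le _) hx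
    simp only [Finset.mem_range]; omega
  · intro x hx
    have : x ≤ ∑ k ∈ L, k := Finset.single_le_sum (f := fun k => k) (fun _ _ => Nat.zero_le _) hx
    simp only [Finset.mem_range]; omega

noncomputable def cc (r s : ℕ) (T : ℤ) : ℤ := ((Pset r s T).ncard : ℤ)

theorem cc_neg (r s : ℕ) (T : ℤ) (hT : T < 0) : cc r s T = 0 := by
  have : Pset r s T = ∅ := by
    ext p
    simp only [Pset, Set.mem_ofPred_eq, Set.mem_empty_iff_false, iff_false]
    rintro ⟨-, -, h⟩
    omega
  simp [cc, this]

theorem cc_swap (r s : ℕ) (T : ℤ) : cc r s T = cc s r T := by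
  have : Pset r s T = Prod.swap '' Pset s r T := by
    ext ⟨K, L⟩
    simp only [Pset, Set.mem_ofPred_eq, Set.mem_image, Prod.exists, Prod.swap_prod_mk, Prod.mk.injEq]
    constructor
    · rintro ⟨h1, h2, h3⟩
      exact ⟨L, K, ⟨h2, h1, by rw [add_comm]; exact h3⟩, rfl, rfl⟩
    · rintro ⟨L', K', ⟨h2, h1, h3⟩, rfl, rfl⟩
      exact ⟨h1, h2, by rw [add_comm]; exact h3⟩
  rw [cc, cc, this, Set.ncard_image_of_injective _ Prod.swap_injective]

def sh (K : Finset ℕ) : Finset ℕ := K.map (addRightEmbedding 1)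

theorem sh_card (K : Finset ℕ) : (sh K).card = K.card := by simp [sh]
theorem sh_sum (K : Finset ℕ) : ∑ k ∈ sh K, k = ∑ k ∈ K, k + K.card := by
  simp [sh, Finset.sum_add_distrib]
theorem sh_zero (K : Finset ℕ) : 0 ∉ sh K := by simp [sh]
theorem sh_inj : Function.Injective sh := Finset.map_injective _
theorem sh_surj (K : Finset ℕ) (h : 0 ∉ K) : ∃ K', sh K' = K := by
  refine ⟨K.image (· - 1), ?_⟩
  ext x
  simp only [sh, Finset.mem_map, Finset.mem_image, addRightEmbedding_apply]
  constructor
  · rintro ⟨y, ⟨z, hz, rfl⟩, rfl⟩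
    have : z ≠ 0 := by rintro rfl; exact h hz
    rwa [show z - 1 + 1 = z by omega]
  · intro hx
    have : x ≠ 0 := by rintro rfl; exact h hx
    exact ⟨x - 1, ⟨x, hx, rfl⟩, by omega⟩

theorem cc_rec (r s : ℕ) (T : ℤ) :
    cc (r + 1) s T = cc (r + 1) s (T - (r + 1 : ℕ)) + cc r s (T - r) := by
  have key : Pset (r+1) s T = (fun p : Finset ℕ × Finset ℕ => (sh p.1, p.2)) ''
      Pset (r+1) s (T - (r + 1 : ℕ)) ∪
      (fun p : Finset ℕ × Finset ℕ => (insert 0 (sh p.1), p.2)) '' Pset r s (T - r) := by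
    ext ⟨K, L⟩
    simp only [Pset, Set.mem_ofPred_eq, Set.mem_image, Prod.exists, Prod.mk.injEq, Set.mem_union]
    constructor
    · rintro ⟨h1, h2, h3⟩
      by_cases h0 : 0 ∈ K
      · right
        obtain ⟨K', hK'⟩ := sh_surj (K.erase 0) (by simp)
        have hK : insert 0 (sh K') = K := by rw [hK', Finset.insert_erase h0]
        subst hK
        rw [Finset.card_insert_of_notMem (sh_zero _), sh_card] at h1
        rw [Finset.sum_insert (sh_zero _), sh_sum] at h3
        refine ⟨K', L, ⟨by omega, h2, ?_⟩, rfl, rfl⟩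
        push_cast at h3 ⊢
        have : (K'.card : ℤ) = r := by omega
        linarith
      · left
        obtain ⟨K', rfl⟩ := sh_surj K h0
        rw [sh_card] at h1
        rw [sh_sum] at h3
        refine ⟨K', L, ⟨by omega, h2, ?_⟩, rfl, rfl⟩
        push_cast at h3 ⊢
        have : (K'.card : ℤ) = r + 1 := by omega
        linarith
    · rintro (⟨K', L', ⟨h1, h2, h3⟩, rfl, rfl⟩ | ⟨K', L', ⟨h1, h2, h3⟩, rfl, rfl⟩)
      · refine ⟨by rw [sh_card, h1], h2, ?_⟩
        rw [sh_sum, h1]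
        push_cast at h3 ⊢
        linarith
      · refine ⟨by rw [Finset.card_insert_of_notMem (sh_zero _), sh_card, h1], h2, ?_⟩
        rw [Finset.sum_insert (sh_zero _), sh_sum, h1]
        push_cast at h3 ⊢
        linarith
  unfold cc
  rw [key, Set.ncard_union_eq _ ((Pset_finite _ _ _).image _) ((Pset_finite _ _ _).image _),
    Set.ncard_image_of_injective, Set.ncard_image_of_injective]
  · push_cast; rfl
  · rintro ⟨K, L⟩ ⟨K', L'⟩ h
    simp only [Prod.mk.injEq] at h ⊢
    refine ⟨sh_inj ?_, h.2⟩
    have := congrArg (fun S => Finset.erase S 0) h.1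
    simpa [Finset.erase_insert (sh_zero _)] using this
  · rintro ⟨K, L⟩ ⟨K', L'⟩ h
    simp only [Prod.mk.injEq] at h ⊢
    exact ⟨sh_inj h.1, h.2⟩
  · rw [Set.disjoint_left]
    rintro ⟨K, L⟩ ⟨⟨K', L'⟩, -, h⟩ ⟨⟨K2, L2⟩, -, h'⟩
    simp only [Prod.mk.injEq] at h h'
    apply sh_zero K'
    rw [h.1, ← h'.1]
    simp

theorem nonneg_of_diff (f : ℤ → ℤ) (r : ℕ) (hr : 1 ≤ r) (h0 : ∀ T < 0, f T = 0)
    (h : ∀ T, f (T - r) ≤ f T) (T : ℤ) : 0 ≤ f T := by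
  have : ∀ n : ℕ, ∀ T : ℤ, T < n → 0 ≤ f T := by
    intro n
    induction n with
    | zero => intro T hT; rw [h0 T (by simpa using hT)]
    | succ n ih =>
      intro T hT
      exact (ih (T - r) (by push_cast at hT; omega)).trans (h T)
  exact this (T.toNat + 1) T (by push_cast; omega)

theorem cc_A (s g : ℕ) (hg : 1 ≤ g) (r : ℕ) :
    g ≤ r → ∀ T, 0 ≤ cc r s T - cc r s (T - g) := by
  induction r with
  | zero => intro h; omega
  | succ r ih =>
    intro h T
    rcases Nat.eq_or_lt_of_le h with h | h
    · subst h
      rw [cc_rec]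
      have : 0 ≤ cc r s (T - r) := by unfold cc; positivity
      linarith
    · refine nonneg_of_diff (fun T => cc (r+1) s T - cc (r+1) s (T - g)) (r+1) (by omega) ?_ ?_ T
      · intro T hT
        rw [cc_neg _ _ _ hT, cc_neg _ _ _ (by omega)]; rfl
      · intro T
        have h1 := cc_rec r s T
        have h2 := cc_rec r s (T - g)
        have h3 := ih (by omega) (T - r)
        rw [show T - ((r+1 : ℕ):ℤ) - g = T - g - ((r+1 : ℕ):ℤ) by ring]
        rw [show T - (r:ℤ) - g = T - g - (r:ℤ) by ring] at h3
        linarith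

theorem cc_B (s g h : ℕ) (hg : 1 ≤ g) (hgh : g < h) (r : ℕ) :
    h ≤ r → ∀ T, 0 ≤ cc r s T - cc r s (T - g) - (cc r s (T - h) - cc r s (T - h - g)) := by
  induction r with
  | zero => intro h; omega
  | succ r ih =>
    intro hr T
    rcases Nat.eq_or_lt_of_le hr with hr | hr
    · subst hr
      have h1 := cc_rec r s T
      have h2 := cc_rec r s (T - g)
      have h3 := cc_A s g hg r (by omega) (T - r)
      rw [show T - ((r+1 : ℕ):ℤ) - g = T - g - ((r+1 : ℕ):ℤ) by ring]
      rw [show T - (r:ℤ) - g = T - g - (r:ℤ) by ring] at h3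
      linarith
    · refine nonneg_of_diff (fun T => cc (r+1) s T - cc (r+1) s (T - g) -
        (cc (r+1) s (T - h) - cc (r+1) s (T - h - g))) (r+1) (by omega) ?_ ?_ T
      · intro T hT
        rw [cc_neg _ _ _ hT, cc_neg _ _ (T - g) (by omega), cc_neg _ _ (T - h) (by omega),
          cc_neg _ _ (T - h - g) (by omega)]; rfl
      · intro T
        have h1 := cc_rec r s T
        have h2 := cc_rec r s (T - g)
        have h4 := cc_rec r s (T - h)
        have h5 := cc_rec r s (T - h - g)
        have h3 := ih (by omega) (T - r)
        rw [show T - ((r+1 : ℕ):ℤ) - g = T - g - ((r+1 : ℕ):ℤ) by ring,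
          show T - ((r+1 : ℕ):ℤ) - h = T - h - ((r+1 : ℕ):ℤ) by ring,
          show T - h - ((r+1 : ℕ):ℤ) - g = T - h - g - ((r+1 : ℕ):ℤ) by ring]
        rw [show T - (r:ℤ) - g = T - g - (r:ℤ) by ring,
          show T - (r:ℤ) - h = T - h - (r:ℤ) by ring,
          show T - h - (r:ℤ) - g = T - h - g - (r:ℤ) by ring] at h3
        linarith

/-- pairs giving sum N -/
def Wset (M a N r s : ℕ) : Set (Finset ℕ × Finset ℕ) :=
  {p | p.1.card = r ∧ p.2.card = s ∧
    M * (∑ k ∈ p.1, k + ∑ k ∈ p.2, k) + a * r + (M - a) * s = N}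

theorem W_eq (M a N r s : ℕ) (hM : 0 < M) (ha : a ≤ M) (T : ℤ)
    (hT : (M : ℤ) * T + a * r + (M - a) * s = N) : ((Wset M a N r s).ncard : ℤ) = cc r s T := by
  unfold cc
  congr 2
  ext ⟨K, L⟩
  simp only [Wset, Pset, Set.mem_ofPred_eq]
  refine and_congr_right fun _ => and_congr_right fun _ => ?_
  rw [← Nat.cast_inj (R := ℤ)]
  push_cast [Nat.cast_sub ha]
  constructor
  · intro h
    have : (M : ℤ) * (∑ k ∈ K, (k:ℤ) + ∑ k ∈ L, (k:ℤ)) = M * T := by linarith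
    exact mul_left_cancel₀ (by positivity) this
  · intro h
    rw [h, hT]

theorem W_zero (M a N r s : ℕ) (ha : a ≤ M)
    (hT : ∀ T : ℤ, (M : ℤ) * T + a * r + (M - a) * s ≠ N) : ((Wset M a N r s).ncard : ℤ) = 0 := by
  have : Wset M a N r s = ∅ := by
    ext ⟨K, L⟩
    simp only [Wset, Set.mem_ofPred_eq, Set.mem_empty_iff_false, iff_false]
    rintro ⟨-, -, h⟩
    apply hT ((∑ k ∈ K, k + ∑ k ∈ L, k : ℕ) : ℤ)
    rw [← h]
    push_cast [Nat.cast_sub ha]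
    rfl
  simp [this]

theorem odd_mul (H b : ℤ) (hH : 0 < H) (hb : IsCoprime b (2 * H)) (d e : ℤ)
    (h : d * b = H * (2 * e + 1)) : ∃ j, d = H * (2 * j + 1) := by
  have h1 : H ∣ d := by
    have : IsCoprime H b := (IsCoprime.of_mul_right_right hb).symm
    exact this.dvd_of_dvd_mul_right (Dvd.intro _ h.symm)
  obtain ⟨t, rfl⟩ := h1
  have h2 : t * b = 2 * e + 1 := by
    apply mul_left_cancel₀ hH.ne'
    linarith
  rcases Int.even_or_odd' t with ⟨j, rfl | rfl⟩
  · exfalso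
    have : 2 * (j * b) = 2 * e + 1 := by linarith
    omega
  · exact ⟨j, rfl⟩

theorem pair_ineq (H a b n r s : ℕ) (hH : 3 ≤ H) (ha : 1 ≤ a) (hab : a < b) (hb : b < H)
    (haM : Nat.Coprime a (2 * H)) (hbM : Nat.Coprime b (2 * H)) (hrs : s < r) :
    ((Wset (2*H) b (2*H*n+H) r s).ncard : ℤ) + (Wset (2*H) b (2*H*n+H) s r).ncard ≤
    ((Wset (2*H) a (2*H*n+H) r s).ncard : ℤ) + (Wset (2*H) a (2*H*n+H) s r).ncard := by
  by_cases hd : ∃ j : ℤ, (r : ℤ) - s = H * (2 * j + 1)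
  · obtain ⟨j, hj⟩ := hd
    have hj0 : 0 ≤ j := by
      by_contra hneg
      have : (H : ℤ) * (2 * j + 1) ≤ 0 :=
        mul_nonpos_of_nonneg_of_nonpos (by positivity) (by omega)
      omega
    lift j to ℕ using hj0
    have hoa : Odd a := Nat.Coprime.odd_of_left (Nat.Coprime.coprime_mul_right_right haM).symm
    have hob : Odd b := Nat.Coprime.odd_of_left (Nat.Coprime.coprime_mul_right_right hbM).symm
    obtain ⟨α, rfl⟩ := hoa
    obtain ⟨β, rfl⟩ := hob
    obtain ⟨γ, rfl⟩ : ∃ γ, H = γ + (α + β + 1) := ⟨H - (α + β + 1), by omega⟩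
    obtain ⟨δ, rfl⟩ : ∃ δ, β = α + δ := ⟨β - α, by omega⟩
    -- g = t δ, h = t γ
    have hr : (r : ℤ) = s + ((γ + (α + (α + δ) + 1) : ℕ) : ℤ) * (2 * j + 1) := by linarith
    set y : ℤ := n - r + (2 * j * α + j + α + 1) with hy
    have e1 : ((Wset (2*(γ + (α + (α + δ) + 1))) (2*(α+δ)+1) (2*(γ + (α + (α + δ) + 1))*n+(γ + (α + (α + δ) + 1))) r s).ncard : ℤ)
        = cc r s (y + (2*j+1)*γ) := by
      apply W_eq
      · omega
      · omega
      · rw [hy, hr]; push_cast; ring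
    have e2 : ((Wset (2*(γ + (α + (α + δ) + 1))) (2*(α+δ)+1) (2*(γ + (α + (α + δ) + 1))*n+(γ + (α + (α + δ) + 1))) s r).ncard : ℤ)
        = cc r s (y + (2*j+1)*δ) := by
      rw [cc_swap]
      apply W_eq
      · omega
      · omega
      · rw [hy, hr]; push_cast; ring
    have e3 : ((Wset (2*(γ + (α + (α + δ) + 1))) (2*α+1) (2*(γ + (α + (α + δ) + 1))*n+(γ + (α + (α + δ) + 1))) r s).ncard : ℤ)
        = cc r s (y + (2*j+1)*γ + (2*j+1)*δ) := by
      apply W_eq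
      · omega
      · omega
      · rw [hy, hr]; push_cast; ring
    have e4 : ((Wset (2*(γ + (α + (α + δ) + 1))) (2*α+1) (2*(γ + (α + (α + δ) + 1))*n+(γ + (α + (α + δ) + 1))) s r).ncard : ℤ)
        = cc r s y := by
      rw [cc_swap]
      apply W_eq
      · omega
      · omega
      · rw [hy, hr]; push_cast; ring
    rw [e1, e2, e3, e4]
    have hδ : 1 ≤ δ := by omega
    have hB := cc_B s ((2*j+1)*δ) ((2*j+1)*γ) (by nlinarith)
      (Nat.mul_lt_mul_of_pos_left (by omega) (by omega)) r
      (by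
        have : r = s + (γ + (α + (α + δ) + 1)) * (2 * j + 1) := by exact_mod_cast hr
        rw [this]; nlinarith) (y + (2*j+1)*γ + (2*j+1)*δ)
    push_cast at hB
    rw [show y + (2*j+1)*γ + (2*j+1)*δ - (2*j+1)*δ = y + (2*j+1)*γ by ring,
      show y + (2*j+1)*γ + (2*j+1)*δ - (2*j+1)*γ = y + (2*j+1)*δ by ring,
      show y + (2*j+1)*δ - (2*j+1)*δ = y by ring] at hB
    linarith
  · have hcop : IsCoprime (b : ℤ) (2 * (H : ℤ)) := by
      have := Nat.isCoprime_iff_coprime.mpr hbM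
      push_cast at this; exact this
    have z1 : ((Wset (2*H) b (2*H*n+H) r s).ncard : ℤ) = 0 := by
      apply W_zero _ _ _ _ _ (by omega)
      intro T hT
      apply hd
      apply odd_mul H b (by omega) hcop _ (n - T - s)
      push_cast at hT
      linarith
    have z2 : ((Wset (2*H) b (2*H*n+H) s r).ncard : ℤ) = 0 := by
      apply W_zero _ _ _ _ _ (by omega)
      intro T hT
      apply hd
      apply odd_mul H b (by omega) hcop _ (T + r - n - 1)
      push_cast at hT
      linarith
    rw [z1, z2]
    positivity

theorem pair_ineq' (H a b n r s : ℕ) (hH : 3 ≤ H) (ha : 1 ≤ a) (hab : a < b) (hb : b < H)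
    (haM : Nat.Coprime a (2 * H)) (hbM : Nat.Coprime b (2 * H)) :
    ((Wset (2*H) b (2*H*n+H) r s).ncard : ℤ) + (Wset (2*H) b (2*H*n+H) s r).ncard ≤
    ((Wset (2*H) a (2*H*n+H) r s).ncard : ℤ) + (Wset (2*H) a (2*H*n+H) s r).ncard := by
  rcases lt_trichotomy s r with h | h | h
  · exact pair_ineq H a b n r s hH ha hab hb haM hbM h
  · subst h
    have : Wset (2*H) b (2*H*n+H) s s = Wset (2*H) a (2*H*n+H) s s := by
      ext p
      simp only [Wset, Set.mem_ofPred_eq]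
      rw [add_assoc, add_assoc, ← add_mul, ← add_mul, show b + (2*H - b) = a + (2*H - a) by omega]
    rw [this]
  · have := pair_ineq H a b n s r hH ha hab hb haM hbM h
    linarith

theorem W_finite (M a N r s : ℕ) (hM : 0 < M) : (Wset M a N r s).Finite := by
  apply Set.Finite.subset (Finset.finite_toSet
    ((Finset.range (N + 1)).powerset ×ˢ (Finset.range (N + 1)).powerset))
  rintro ⟨K, L⟩ ⟨-, -, h⟩
  simp only [Finset.coe_product, Set.mem_prod, Finset.mem_coe, Finset.mem_powerset]
  simp only at h
  have h' : ∑ k ∈ K, k + ∑ k ∈ L, k ≤ N := by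
    have := Nat.le_mul_of_pos_left (∑ k ∈ K, k + ∑ k ∈ L, k) hM
    omega
  constructor
  · intro x hx
    have : x ≤ ∑ k ∈ K, k := Finset.single_le_sum (f := fun k => k) (fun _ _ => Nat.zero_le _) hx
    simp only [Finset.mem_range]; omega
  · intro x hx
    have : x ≤ ∑ k ∈ L, k := Finset.single_le_sum (f := fun k => k) (fun _ _ => Nat.zero_le _) hx
    simp only [Finset.mem_range]; omega

def lin (M c : ℕ) (K : Finset ℕ) : Finset ℕ := K.image (fun k => M * k + c)

theorem lin_injOn (M c : ℕ) (hM : 0 < M) : Function.Injective (fun k => M * k + c) := by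
  intro x y h
  simp only at h
  exact Nat.eq_of_mul_eq_mul_left hM (by omega)

theorem lin_card (M c : ℕ) (hM : 0 < M) (K : Finset ℕ) : (lin M c K).card = K.card :=
  Finset.card_image_of_injective _ (lin_injOn M c hM)

theorem lin_sum (M c : ℕ) (hM : 0 < M) (K : Finset ℕ) :
    ∑ x ∈ lin M c K, x = M * ∑ k ∈ K, k + c * K.card := by
  rw [lin, Finset.sum_image (fun x _ y _ h => lin_injOn M c hM h), Finset.sum_add_distrib,
    Finset.mul_sum]
  simp [mul_comm]

theorem lin_mod (M c : ℕ) (hc : c < M) (K : Finset ℕ) (x : ℕ) (hx : x ∈ lin M c K) :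
    x % M = c := by
  simp only [lin, Finset.mem_image] at hx
  obtain ⟨k, -, rfl⟩ := hx
  rw [Nat.mul_add_mod, Nat.mod_eq_of_lt hc]

theorem lin_surj (M c : ℕ) (S : Finset ℕ) (h : ∀ x ∈ S, x % M = c) :
    lin M c (S.image (· / M)) = S := by
  ext x
  simp only [lin, Finset.mem_image]
  constructor
  · rintro ⟨_, ⟨z, hz, rfl⟩, rfl⟩
    rw [← h z hz, Nat.div_add_mod]; exact hz
  · intro hx
    exact ⟨_, ⟨x, hx, rfl⟩, by rw [← h x hx, Nat.div_add_mod]⟩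

theorem lin_filter (M a : ℕ) (ha : 1 ≤ a) (h2 : 2 * a < M) (K L : Finset ℕ) :
    (lin M a K ∪ lin M (M - a) L).filter (fun x => x % M = a) = lin M a K ∧
    (lin M a K ∪ lin M (M - a) L).filter (fun x => x % M = M - a) = lin M (M - a) L := by
  constructor <;>
  · ext x
    simp only [Finset.mem_filter, Finset.mem_union]
    have h1 := lin_mod M a (by omega) K x
    have h3 := lin_mod M (M - a) (by omega) L x
    constructor
    · rintro ⟨h | h, h'⟩
      · first | exact h | (have := h1 h; omega)
      · first | exact h | (have := h3 h; omega)
    · intro h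
      first | exact ⟨Or.inl h, h1 h⟩ | exact ⟨Or.inr h, h3 h⟩

theorem lin_disj (M a : ℕ) (ha : 1 ≤ a) (h2 : 2 * a < M) (K L : Finset ℕ) :
    Disjoint (lin M a K) (lin M (M - a) L) := by
  rw [Finset.disjoint_left]
  intro x h h'
  have := lin_mod M a (by omega) K x h
  have := lin_mod M (M - a) (by omega) L x h'
  omega

theorem count_eq (M a N m : ℕ) (ha : 1 ≤ a) (h2 : 2 * a < M) :
    (Finset.univ.filter (fun p : Nat.Partition N =>
        Multiset.card p.parts = m ∧ p.parts.Nodup ∧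
        ∀ x ∈ p.parts, x % M = a ∨ x % M = M - a)).card =
    ∑ q ∈ Finset.HasAntidiagonal.antidiagonal m, (Wset M a N q.1 q.2).ncard := by
  have hM : 0 < M := by omega
  classical
  have h1 : ∀ q : ℕ × ℕ, (Wset M a N q.1 q.2).ncard = (W_finite M a N q.1 q.2 hM).toFinset.card :=
    fun q => Set.ncard_eq_toFinset_card _ _
  simp_rw [h1]
  rw [← Finset.card_biUnion]
  · symm
    have hmem : ∀ p : Finset ℕ × Finset ℕ, p ∈ (Finset.HasAntidiagonal.antidiagonal m).biUnion
        (fun q => (W_finite M a N q.1 q.2 hM).toFinset) ↔ p.1.card + p.2.card = m ∧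
        ∑ x ∈ (lin M a p.1 ∪ lin M (M - a) p.2), x = N := by
      rintro ⟨K, L⟩
      rw [Finset.sum_union (lin_disj M a ha h2 K L), lin_sum _ _ hM, lin_sum _ _ hM]
      simp only [Finset.mem_biUnion, Finset.HasAntidiagonal.mem_antidiagonal, Set.Finite.mem_toFinset, Wset,
        Set.mem_ofPred_eq, Prod.exists]
      constructor
      · rintro ⟨r, s, h, rfl, rfl, h3⟩
        exact ⟨h, by rw [← h3]; ring⟩
      · rintro ⟨h, h3⟩
        exact ⟨_, _, h, rfl, rfl, by rw [← h3]; ring⟩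
    refine Finset.card_bij (fun p hp => (⟨(lin M a p.1 ∪ lin M (M - a) p.2).val, ?_, ?_⟩ :
      Nat.Partition N)) ?_ ?_ ?_
    · intro x hx
      rw [Finset.mem_val, Finset.mem_union] at hx
      rcases hx with hx | hx
      · have := lin_mod M a (by omega) _ x hx
        by_contra h0
        have : x = 0 := by omega
        subst this
        simp at *; omega
      · have := lin_mod M (M - a) (by omega) _ x hx
        by_contra h0
        have : x = 0 := by omega
        subst this
        simp at *; omega
    · have := ((hmem p).1 hp).2
      rw [← this, Finset.sum_eq_multiset_sum, Multiset.map_id']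
    · rintro p hp
      have := ((hmem p).1 hp).1
      simp only [Finset.mem_filter, Finset.mem_univ, true_and]
      refine ⟨?_, Finset.nodup _, ?_⟩
      · rw [Finset.card_val, Finset.card_union_of_disjoint (lin_disj M a ha h2 _ _),
          lin_card _ _ hM, lin_card _ _ hM, this]
      · intro x hx
        rw [Finset.mem_val, Finset.mem_union] at hx
        exact hx.imp (lin_mod M a (by omega) _ x) (lin_mod M (M - a) (by omega) _ x)
    · rintro ⟨K, L⟩ hp ⟨K', L'⟩ hp' h
      have h := congrArg Nat.Partition.parts h
      simp only [Finset.val_inj] at h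
      have f1 := lin_filter M a ha h2 K L
      have f2 := lin_filter M a ha h2 K' L'
      rw [h, f2.1, f2.2] at f1
      simp only [Prod.mk.injEq]
      exact ⟨Finset.image_injective (lin_injOn M a hM) f1.1.symm,
        Finset.image_injective (lin_injOn M (M - a) hM) f1.2.symm⟩
    · rintro p hp
      simp only [Finset.mem_filter, Finset.mem_univ, true_and] at hp
      obtain ⟨hc, hn, hx⟩ := hp
      set S : Finset ℕ := ⟨p.parts, hn⟩ with hS
      have hxS : ∀ x ∈ S, x % M = a ∨ x % M = M - a := fun x h => hx x h
      set K := (S.filter (fun x => x % M = a)).image (· / M) with hK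
      set L := (S.filter (fun x => x % M = M - a)).image (· / M) with hL
      have e1 : lin M a K = S.filter (fun x => x % M = a) :=
        lin_surj _ _ _ (fun x h => (Finset.mem_filter.1 h).2)
      have e2 : lin M (M - a) L = S.filter (fun x => x % M = M - a) :=
        lin_surj _ _ _ (fun x h => (Finset.mem_filter.1 h).2)
      have e3 : lin M a K ∪ lin M (M - a) L = S := by
        rw [e1, e2, ← Finset.filter_or]
        exact Finset.filter_true_of_mem hxS
      refine ⟨(K, L), (hmem _).2 ⟨?_, ?_⟩, ?_⟩
      · simp only
        rw [← lin_card M a hM K, ← lin_card M (M - a) hM L,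
          ← Finset.card_union_of_disjoint (lin_disj M a ha h2 _ _), e3]
        exact hc
      · simp only
        rw [e3, Finset.sum_eq_multiset_sum, Multiset.map_id']
        exact p.parts_sum
      · apply Nat.Partition.ext
        simp only [e3]
        rfl
  · rintro ⟨r, s⟩ - ⟨r', s'⟩ - hne
    rw [Function.onFun, Finset.disjoint_left]
    intro p hp hp'
    simp only [Set.Finite.mem_toFinset, Wset, Set.mem_ofPred_eq] at hp hp'
    apply hne
    rw [← hp.1, ← hp.2.1, ← hp'.1, ← hp'.2.1]

theorem distinct_partition_inequality_mod_M_even (M a b : ℕ) (hM : 6 ≤ M) (hMe : Even M)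
    (ha : 1 ≤ a) (hab : a < b) (hb : 2 * b < M)
    (haM : Nat.Coprime a M) (hbM : Nat.Coprime b M)
    (n m : ℕ) (hm1 : 1 ≤ m) (hm2 : m ≤ M * n + M / 2) :
    (Finset.univ.filter (fun p : Nat.Partition (M * n + M / 2) =>
        Multiset.card p.parts = m ∧ p.parts.Nodup ∧
        ∀ x ∈ p.parts, x % M = a ∨ x % M = M - a)).card ≥
    (Finset.univ.filter (fun p : Nat.Partition (M * n + M / 2) =>
        Multiset.card p.parts = m ∧ p.parts.Nodup ∧
        ∀ x ∈ p.parts, x % M = b ∨ x % M = M - b)).card := by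
  rw [count_eq M a _ m ha (by omega), count_eq M b _ m (by omega) hb]
  obtain ⟨H, rfl⟩ := hMe.two_dvd
  rw [show 2 * H / 2 = H by omega]
  have key : ∀ c : ℕ, 2 * ∑ q ∈ Finset.HasAntidiagonal.antidiagonal m, (Wset (2*H) c (2*H*n+H) q.1 q.2).ncard =
      ∑ q ∈ Finset.HasAntidiagonal.antidiagonal m, ((Wset (2*H) c (2*H*n+H) q.1 q.2).ncard +
        (Wset (2*H) c (2*H*n+H) q.2 q.1).ncard) := by
    intro c
    rw [Finset.sum_add_distrib, two_mul]
    congr 1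
    exact (Finset.Nat.sum_antidiagonal_swap
      (f := fun q => (Wset (2*H) c (2*H*n+H) q.1 q.2).ncard)).symm
  have : 2 * ∑ q ∈ Finset.HasAntidiagonal.antidiagonal m, (Wset (2*H) b (2*H*n+H) q.1 q.2).ncard ≤
      2 * ∑ q ∈ Finset.HasAntidiagonal.antidiagonal m, (Wset (2*H) a (2*H*n+H) q.1 q.2).ncard := by
    rw [key, key]
    apply Finset.sum_le_sum
    intro q _
    exact_mod_cast pair_ineq' H a b n q.1 q.2 (by omega) ha hab (by omega) haM hbM
  omega
end

section
/- For every integer n ≥ 1 and every integer m with 1 ≤ m ≤ 5n, the number of partitions of 5n into exactly m parts, each part congruent to 1 or 4 modulo 5, is greater than or equal to the number of partitions of 5n into exactly m parts, each part congruent to 2 or 3 modulo 5; that is, p_{1,5}(m, 5n) ≥ p_{2,5}(m, 5n). -/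
open Finset PowerSeries

/-- Multisets of naturals with `a` elements and sum `k`. -/
def MM (a k : ℕ) : Finset (Multiset ℕ) :=
  ((a • Multiset.range (k + 1)).powerset.toFinset).filter
    (fun s => Multiset.card s = a ∧ s.sum = k)

theorem mem_MM (a k : ℕ) (s : Multiset ℕ) :
    s ∈ MM a k ↔ Multiset.card s = a ∧ s.sum = k := by
  unfold MM
  rw [Finset.mem_filter, Multiset.mem_toFinset, Multiset.mem_powerset]
  refine ⟨fun h => h.2, fun h => ⟨?_, h⟩⟩
  rw [Multiset.le_iff_count]
  intro x
  by_cases hx : x ∈ s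
  · have h1 : x ≤ k := h.2 ▸ Multiset.le_sum_of_mem hx
    have h2 : Multiset.count x s ≤ a := h.1 ▸ Multiset.count_le_card x s
    have h3 : 1 ≤ Multiset.count x (Multiset.range (k + 1)) := by
      rw [Multiset.one_le_count_iff_mem, Multiset.mem_range]; omega
    rw [Multiset.count_nsmul]
    nlinarith
  · rw [Multiset.count_eq_zero_of_notMem hx]; exact Nat.zero_le _

theorem sum_map_succ (s : Multiset ℕ) :
    (s.map (fun x => x + 1)).sum = s.sum + Multiset.card s := by
  induction s using Multiset.induction with
  | empty => simp
  | cons a s ih => simp [ih]; omega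

theorem card_MM_zero (k : ℕ) : (MM 0 k).card = if k = 0 then 1 else 0 := by
  split_ifs with h
  · rw [Finset.card_eq_one]
    refine ⟨0, ?_⟩
    ext s
    rw [mem_MM, Finset.mem_singleton, Multiset.card_eq_zero]
    constructor
    · exact fun h => h.1
    · rintro rfl; simp [h]
  · rw [Finset.card_eq_zero, Finset.eq_empty_iff_forall_notMem]
    intro s hs
    rw [mem_MM, Multiset.card_eq_zero] at hs
    obtain ⟨rfl, h2⟩ := hs
    simp at h2; omega

theorem pred_succ_map (s : Multiset ℕ) (h : 0 ∉ s) :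
    (s.map (fun x => x - 1)).map (fun x => x + 1) = s := by
  rw [Multiset.map_map]
  conv_rhs => rw [← Multiset.map_id s]
  apply Multiset.map_congr rfl
  intro x hx
  have : x ≠ 0 := fun h0 => h (h0 ▸ hx)
  simp; omega

theorem card_MM_succ (a k : ℕ) : (MM (a + 1) k).card =
    (MM a k).card + if a + 1 ≤ k then (MM (a + 1) (k - (a + 1))).card else 0 := by
  rw [← Finset.card_filter_add_card_filter_not (s := MM (a + 1) k) (fun s => 0 ∈ s)]
  congr 1
  · apply Finset.card_nbij' (fun s => s.erase 0) (fun s => 0 ::ₘ s)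
    · intro s hs
      simp only [Finset.coe_filter, Set.mem_ofPred_eq, mem_MM] at hs
      simp only [Finset.mem_coe, mem_MM]
      obtain ⟨⟨h1, h2⟩, h3⟩ := hs
      rw [← Multiset.cons_erase h3] at h1 h2
      simp at h1 h2
      rw [Multiset.card_erase_of_mem h3]
      exact ⟨by rw [Nat.pred_eq_sub_one]; have := Multiset.card_erase_of_mem h3; rw [← Multiset.cons_erase h3]; simp; omega, h2⟩
    · intro s hs
      simp only [Finset.mem_coe, mem_MM] at hs
      simp [mem_MM, hs.1, hs.2]
    · intro s hs
      simp only [Finset.coe_filter, Set.mem_ofPred_eq] at hs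
      exact Multiset.cons_erase hs.2
    · intro s hs
      simp
  · split_ifs with h
    · apply Finset.card_nbij' (fun s => s.map (fun x => x - 1)) (fun s => s.map (fun x => x + 1))
      · intro s hs
        simp only [Finset.coe_filter, Set.mem_ofPred_eq, mem_MM] at hs
        obtain ⟨⟨h1, h2⟩, h3⟩ := hs
        simp only [Finset.mem_coe, mem_MM]
        have := sum_map_succ (s.map (fun x => x - 1))
        rw [pred_succ_map s h3, Multiset.card_map] at this
        refine ⟨by simpa using h1, by omega⟩
      · intro s hs
        simp only [Finset.mem_coe, mem_MM] at hs
        simp only [Finset.coe_filter, Set.mem_ofPred_eq, mem_MM, sum_map_succ, Multiset.card_map]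
        refine ⟨⟨hs.1, by omega⟩, by simp⟩
      · intro s hs
        simp only [Finset.coe_filter, Set.mem_ofPred_eq] at hs
        exact pred_succ_map s hs.2
      · intro s hs
        simp
    · rw [Finset.card_eq_zero, Finset.eq_empty_iff_forall_notMem]
      intro s hs
      rw [Finset.mem_filter, mem_MM] at hs
      obtain ⟨⟨h1, h2⟩, h3⟩ := hs
      have := sum_map_succ (s.map (fun x => x - 1))
      rw [pred_succ_map s h3, Multiset.card_map] at this
      omega

/-- Generating function. -/
noncomputable def AA (a : ℕ) : PowerSeries ℤ := PowerSeries.mk (fun k => ((MM a k).card : ℤ))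

theorem AA_succ (a : ℕ) : AA (a + 1) * (1 - X ^ (a + 1)) = AA a := by
  ext k
  rw [mul_sub, mul_one, map_sub, PowerSeries.coeff_mul_X_pow']
  simp only [AA, PowerSeries.coeff_mk]
  rw [card_MM_succ a k]
  split_ifs <;> push_cast <;> ring

theorem nonneg_of_mul (c : ℕ) (B : PowerSeries ℤ)
    (h : ∀ k, 0 ≤ coeff k (B * (1 - X ^ (c + 1)))) : ∀ k, 0 ≤ coeff k B := by
  intro k
  induction k using Nat.strong_induction_on with
  | _ k ih =>
    have := h k
    rw [mul_sub, mul_one, map_sub, PowerSeries.coeff_mul_X_pow'] at this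
    split_ifs at this with h1
    · have := ih (k - (c + 1)) (by omega)
      omega
    · omega

theorem AA_nonneg (a k : ℕ) : 0 ≤ coeff k (AA a) := by
  simp [AA]

theorem AA_prod_nonneg (a : ℕ) : ∀ s : Finset ℕ, s ⊆ range a →
    ∀ k, 0 ≤ coeff k (AA a * ∏ i ∈ s, (1 - X ^ (i + 1))) := by
  induction a with
  | zero =>
    intro s hs k
    have : s = ∅ := by simpa using hs
    subst this
    simpa using AA_nonneg 0 k
  | succ a ih =>
    intro s hs
    by_cases ha : a ∈ s
    · rw [← Finset.mul_prod_erase s _ ha, ← mul_assoc, AA_succ]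
      apply ih
      intro x hx
      rw [Finset.mem_erase] at hx
      have := hs hx.2
      simp at this ⊢; omega
    · apply nonneg_of_mul a
      rw [mul_right_comm, AA_succ]
      apply ih
      intro x hx
      have := hs hx
      have h2 : x ≠ a := fun h => ha (h ▸ hx)
      simp at this ⊢; omega

theorem coeff_mul_nonneg' (A B : PowerSeries ℤ) (hA : ∀ k, 0 ≤ coeff k A)
    (hB : ∀ k, 0 ≤ coeff k B) (k : ℕ) : 0 ≤ coeff k (A * B) := by
  rw [PowerSeries.coeff_mul]
  exact Finset.sum_nonneg fun x _ => mul_nonneg (hA _) (hB _)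

theorem key (b d n : ℕ) :
    coeff n (X ^ (b + 2 * d) * (AA (b + 5 * d) * AA b)) +
    coeff n (X ^ (b + 3 * d) * (AA (b + 5 * d) * AA b)) ≤
    coeff n (X ^ (b + d) * (AA (b + 5 * d) * AA b)) +
    coeff n (X ^ (b + 4 * d) * (AA (b + 5 * d) * AA b)) := by
  rcases Nat.eq_zero_or_pos d with rfl | hd
  · simp
  rw [← sub_nonneg, ← map_add, ← map_add, ← map_sub]
  have h1 := AA_prod_nonneg (b + 5 * d) {d - 1, 2 * d - 1} (by
    intro x hx; simp at hx ⊢; omega)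
  rw [Finset.prod_pair (by omega), Nat.sub_add_cancel (by omega),
    Nat.sub_add_cancel (by omega)] at h1
  have h2 := coeff_mul_nonneg' _ _ h1 (AA_nonneg b)
  have h3 := coeff_mul_nonneg' (X ^ (b + d)) _ (by
    intro k; rw [PowerSeries.coeff_X_pow]; split_ifs <;> simp) h2 n
  convert h3 using 2
  ring

/-- Count for fixed numbers of parts. -/
def DD (r t n a b : ℕ) : ℕ :=
  ∑ ij ∈ range (n + 1) ×ˢ range (n + 1),
    if 5 * (ij.1 + ij.2) + r * a + t * b = 5 * n then (MM a ij.1).card * (MM b ij.2).card else 0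

theorem DD_zero (r t n a b : ℕ) (h : ¬ 5 ∣ r * a + t * b) : DD r t n a b = 0 := by
  unfold DD
  apply Finset.sum_eq_zero
  intro x _
  rw [if_neg]
  intro h1
  apply h
  omega

theorem DD_eq (r t n a b e : ℕ) (h : r * a + t * b = 5 * e) :
    (DD r t n a b : ℤ) = coeff n (X ^ e * (AA a * AA b)) := by
  unfold DD
  rw [PowerSeries.coeff_X_pow_mul', ← Finset.sum_filter]
  split_ifs with he
  · rw [PowerSeries.coeff_mul]
    simp only [AA, PowerSeries.coeff_mk]
    push_cast
    apply Finset.sum_congr _ (fun _ _ => rfl)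
    ext ⟨i, j⟩
    simp only [Finset.mem_filter, Finset.mem_product, Finset.mem_range, Finset.HasAntidiagonal.mem_antidiagonal]
    omega
  · norm_cast
    apply Finset.sum_eq_zero
    intro x hx
    simp only [Finset.mem_filter, Finset.mem_product, Finset.mem_range] at hx
    omega

theorem DD_ineq (n a b : ℕ) :
    DD 2 3 n a b + DD 2 3 n b a ≤ DD 1 4 n a b + DD 1 4 n b a := by
  wlog hab : b ≤ a generalizing a b
  · have := this b a (by omega)
    omega
  by_cases h : 5 ∣ a - b
  · obtain ⟨d, hd⟩ := h
    obtain rfl : a = b + 5 * d := by omega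
    have := key b d n
    rw [← DD_eq 1 4 n (b + 5 * d) b (b + d) (by ring),
      ← DD_eq 2 3 n (b + 5 * d) b (b + 2 * d) (by ring),
      mul_comm (AA (b + 5 * d)) (AA b),
      ← DD_eq 1 4 n b (b + 5 * d) (b + 4 * d) (by ring),
      ← DD_eq 2 3 n b (b + 5 * d) (b + 3 * d) (by ring)] at this
    exact_mod_cast this
  · rw [DD_zero 2 3 n a b (by omega), DD_zero 2 3 n b a (by omega)]
    omega

theorem sum_map_lin (r : ℕ) (s : Multiset ℕ) :
    (s.map (fun x => 5 * x + r)).sum = 5 * s.sum + r * Multiset.card s := by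
  induction s using Multiset.induction with
  | empty => simp
  | cons a s ih => simp [ih]; ring

/-- Quotients of the parts in residue class `r`. -/
def QQ (r : ℕ) (s : Multiset ℕ) : Multiset ℕ := (s.filter (fun x => x % 5 = r)).map (fun x => x / 5)

theorem QQ_map (r : ℕ) (s : Multiset ℕ) :
    (QQ r s).map (fun x => 5 * x + r) = s.filter (fun x => x % 5 = r) := by
  unfold QQ
  rw [Multiset.map_map]
  conv_rhs => rw [← Multiset.map_id (s.filter (fun x => x % 5 = r))]
  apply Multiset.map_congr rfl
  intro x hx
  have := (Multiset.mem_filter.1 hx).2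
  simp; omega

theorem QQ_recon (r t : ℕ) (hrt : r ≠ t) (s : Multiset ℕ) (h : ∀ x ∈ s, x % 5 = r ∨ x % 5 = t) :
    (QQ r s).map (fun x => 5 * x + r) + (QQ t s).map (fun x => 5 * x + t) = s := by
  rw [QQ_map, QQ_map]
  conv_rhs => rw [← Multiset.filter_add_not (fun x => x % 5 = r) s]
  congr 1
  apply Multiset.filter_congr
  intro x hx
  have := h x hx
  omega

theorem QQ_add (r : ℕ) (s t : Multiset ℕ) : QQ r (s + t) = QQ r s + QQ r t := by
  simp [QQ]

theorem QQ_same (r : ℕ) (hr : r < 5) (s : Multiset ℕ) :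
    QQ r (s.map (fun x => 5 * x + r)) = s := by
  unfold QQ
  rw [Multiset.filter_eq_self.2, Multiset.map_map]
  · conv_rhs => rw [← Multiset.map_id s]
    apply Multiset.map_congr rfl
    intro x _
    simp; omega
  · intro x hx
    obtain ⟨y, _, rfl⟩ := Multiset.mem_map.1 hx
    omega

theorem QQ_diff (r t : ℕ) (hrt : r ≠ t) (ht : t < 5) (s : Multiset ℕ) :
    QQ r (s.map (fun x => 5 * x + t)) = 0 := by
  unfold QQ
  rw [Multiset.filter_eq_nil.2, Multiset.map_zero]
  intro x hx
  obtain ⟨y, _, rfl⟩ := Multiset.mem_map.1 hx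
  omega

theorem count_eq_s4 (r t n m : ℕ) (hr : 0 < r) (ht : 0 < t) (hr5 : r < 5) (ht5 : t < 5) (hrt : r ≠ t) :
    (Finset.univ.filter (fun p : Nat.Partition (5 * n) =>
        Multiset.card p.parts = m ∧
        ∀ x ∈ p.parts, x % 5 = r ∨ x % 5 = t)).card =
    ∑ ab ∈ antidiagonal m, DD r t n ab.1 ab.2 := by
  unfold DD
  rw [← Finset.sum_product']
  have hp : ∀ p : Nat.Partition (5 * n), Multiset.card p.parts = m →
      (∀ x ∈ p.parts, x % 5 = r ∨ x % 5 = t) →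
      (Multiset.card (QQ r p.parts) + Multiset.card (QQ t p.parts) = m ∧
      5 * ((QQ r p.parts).sum + (QQ t p.parts).sum) + r * Multiset.card (QQ r p.parts)
        + t * Multiset.card (QQ t p.parts) = 5 * n) := by
    intro p h1 h2
    have h3 := QQ_recon r t hrt p.parts h2
    have h4 := congrArg Multiset.card h3
    have h5 := congrArg Multiset.sum h3
    rw [Multiset.sum_add, sum_map_lin, sum_map_lin, p.parts_sum] at h5
    rw [Multiset.card_add, Multiset.card_map, Multiset.card_map, h1] at h4
    exact ⟨h4, by linarith⟩
  rw [Finset.card_eq_sum_card_fiberwise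
    (f := fun p : Nat.Partition (5 * n) =>
      ((Multiset.card (QQ r p.parts), Multiset.card (QQ t p.parts)),
        ((QQ r p.parts).sum, (QQ t p.parts).sum)))
    (t := antidiagonal m ×ˢ (range (n + 1) ×ˢ range (n + 1)))]
  · apply Finset.sum_congr rfl
    rintro ⟨⟨a, b⟩, ⟨i, j⟩⟩ hmem
    simp only [Finset.mem_product, Finset.HasAntidiagonal.mem_antidiagonal] at hmem
    have hab := hmem.1
    simp only
    split_ifs with heq
    · rw [← Finset.card_product]
      have hsum : ∀ ST ∈ MM a i ×ˢ MM b j,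
          (ST.1.map (fun x => 5 * x + r) + ST.2.map (fun x => 5 * x + t)).sum = 5 * n := by
        intro ST hST
        rw [Finset.mem_product, mem_MM, mem_MM] at hST
        rw [Multiset.sum_add, sum_map_lin, sum_map_lin, hST.1.1, hST.1.2, hST.2.1, hST.2.2, ← heq]
        ring
      refine Finset.card_bij' (fun p _ => (QQ r p.parts, QQ t p.parts))
        (fun ST hST => (⟨ST.1.map (fun x => 5 * x + r) + ST.2.map (fun x => 5 * x + t), by
          intro x hx
          rw [Multiset.mem_add, Multiset.mem_map, Multiset.mem_map] at hx
          rcases hx with ⟨y, _, rfl⟩ | ⟨y, _, rfl⟩ <;> omega, hsum ST hST⟩ :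
            Nat.Partition (5 * n))) ?_ ?_ ?_ ?_
      · intro p h
        simp only [Finset.mem_filter, Prod.mk.injEq] at h
        simp only [Finset.mem_product, mem_MM]
        tauto
      · intro ST hST
        simp only [Finset.mem_product, mem_MM] at hST
        simp only [Finset.mem_filter, Finset.mem_univ, true_and, QQ_add, QQ_same r hr5,
          QQ_same t ht5, QQ_diff r t hrt ht5, QQ_diff t r hrt.symm hr5, Multiset.card_add,
          Multiset.card_map, hST.1.1, hST.1.2, hST.2.1, hST.2.2, zero_add, add_zero, and_true]
        refine ⟨hab, ?_⟩
        intro x hx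
        rw [Multiset.mem_add, Multiset.mem_map, Multiset.mem_map] at hx
        rcases hx with ⟨y, _, rfl⟩ | ⟨y, _, rfl⟩ <;> omega
      · intro p h
        simp only [Finset.mem_filter] at h
        apply Nat.Partition.ext
        exact QQ_recon r t hrt p.parts h.1.2.2
      · intro ST hST
        simp only [QQ_add, QQ_same r hr5,
          QQ_same t ht5, QQ_diff r t hrt ht5, QQ_diff t r hrt.symm hr5, zero_add, add_zero]
    · rw [Finset.card_eq_zero, Finset.eq_empty_iff_forall_notMem]
      intro p h
      simp only [Finset.mem_filter, Prod.mk.injEq] at h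
      obtain ⟨⟨_, h1, h2⟩, ⟨rfl, rfl⟩, rfl, rfl⟩ := h
      exact heq (hp p h1 h2).2
  · intro p h
    simp only [Finset.coe_filter, Set.mem_ofPred_eq] at h
    obtain ⟨_, h1, h2⟩ := h
    have := hp p h1 h2
    simp only [Finset.mem_coe, Finset.mem_product, Finset.HasAntidiagonal.mem_antidiagonal, Finset.mem_range]
    refine ⟨this.1, ?_, ?_⟩ <;> omega

theorem partition_inequality_mod_five (n m : ℕ) (hn : 1 ≤ n) (hm1 : 1 ≤ m) (hm2 : m ≤ 5 * n) :
    (Finset.univ.filter (fun p : Nat.Partition (5 * n) =>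
        Multiset.card p.parts = m ∧
        ∀ x ∈ p.parts, x % 5 = 1 ∨ x % 5 = 4)).card ≥
    (Finset.univ.filter (fun p : Nat.Partition (5 * n) =>
        Multiset.card p.parts = m ∧
        ∀ x ∈ p.parts, x % 5 = 2 ∨ x % 5 = 3)).card := by
  rw [count_eq_s4 1 4 n m (by omega) (by omega) (by omega) (by omega) (by omega),
    count_eq_s4 2 3 n m (by omega) (by omega) (by omega) (by omega) (by omega)]
  have h1 := Finset.sum_le_sum (s := antidiagonal m) (fun ab _ => DD_ineq n ab.1 ab.2)
  rw [Finset.sum_add_distrib, Finset.sum_add_distrib] at h1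
  have h2 : ∀ r t, ∑ ab ∈ antidiagonal m, DD r t n ab.2 ab.1 =
      ∑ ab ∈ antidiagonal m, DD r t n ab.1 ab.2 := fun r t =>
    Finset.Nat.sum_antidiagonal_swap (n := m) (f := fun ab : ℕ × ℕ => DD r t n ab.1 ab.2)
  rw [h2, h2] at h1
  omega
end

section
/- (Andrews, finite little Göllnitz theorem) Let L > 0 be an integer. In the ring of formal power series over ℚ in one variable q, define f_n by Σ_{n≥0} f_n q^n = (∏_{j=0}^{L−1} (1 − q^{1+8j})(1 − q^{5+8j})(1 − q^{6+8j}))⁻¹ − (∏_{j=0}^{L−1} (1 − q^{2+8j})(1 − q^{3+8j})(1 − q^{7+8j}))⁻¹. Then f_n ≥ 0 for all n ≥ 0. -/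
open PowerSeries

def NNeg (f : PowerSeries ℚ) : Prop := ∀ n, 0 ≤ PowerSeries.coeff (R := ℚ) n f

theorem NNeg.mul {f g : PowerSeries ℚ} (hf : NNeg f) (hg : NNeg g) : NNeg (f * g) := by
  intro n
  rw [PowerSeries.coeff_mul]
  exact Finset.sum_nonneg fun p _ => mul_nonneg (hf _) (hg _)

theorem NNeg.add {f g : PowerSeries ℚ} (hf : NNeg f) (hg : NNeg g) : NNeg (f + g) := by
  intro n
  rw [map_add]
  exact add_nonneg (hf _) (hg _)

theorem NNeg.X_pow (a : ℕ) : NNeg (X ^ a) := by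
  intro n
  rw [PowerSeries.coeff_X_pow]
  split_ifs <;> norm_num

theorem NNeg.one : NNeg 1 := by simpa using NNeg.X_pow 0

theorem NNeg.prod {f : ℕ → PowerSeries ℚ} (L : ℕ) (h : ∀ j, NNeg (f j)) :
    NNeg (∏ j ∈ Finset.range L, f j) := by
  induction L with
  | zero => simpa using NNeg.one
  | succ k ih => rw [Finset.prod_range_succ]; exact ih.mul (h k)

/-- geometric series -/
noncomputable def geo (a : ℕ) : PowerSeries ℚ := (1 - X ^ a)⁻¹

theorem geo_mul {a : ℕ} (ha : 0 < a) : (1 - X ^ a) * geo a = 1 := by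
  apply PowerSeries.mul_inv_cancel
  simp [ha.ne']

theorem geo_nneg {a : ℕ} (ha : 0 < a) : NNeg (geo a) := by
  have h : geo a = 1 + X ^ a * geo a := by linear_combination geo_mul ha
  intro n
  induction n using Nat.strong_induction_on with
  | _ n ih =>
    rw [h, map_add, PowerSeries.coeff_X_pow_mul']
    refine add_nonneg (NNeg.one n) ?_
    split_ifs with h1
    · exact ih _ (by omega)
    · exact le_rfl

def Dom (A B : PowerSeries ℚ) : Prop :=
  NNeg A ∧ NNeg B ∧ ∃ C, NNeg C ∧ A - B = (1 - X ^ 2) * C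

theorem Dom.mul {A B A' B' : PowerSeries ℚ} (h : Dom A B) (h' : Dom A' B') :
    Dom (A * A') (B * B') := by
  obtain ⟨hA, hB, C, hC, e⟩ := h
  obtain ⟨hA', hB', C', hC', e'⟩ := h'
  refine ⟨hA.mul hA', hB.mul hB', A * C' + C * B', (hA.mul hC').add (hC.mul hB'), ?_⟩
  linear_combination A * e' + B' * e

theorem Dom.prod {f g : ℕ → PowerSeries ℚ} (L : ℕ) (h : ∀ j, Dom (f j) (g j)) :
    Dom (∏ j ∈ Finset.range L, f j) (∏ j ∈ Finset.range L, g j) := by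
  induction L with
  | zero => exact ⟨by simpa using NNeg.one, by simpa using NNeg.one, 0, by intro n; simp, by simp⟩
  | succ k ih => rw [Finset.prod_range_succ, Finset.prod_range_succ]; exact ih.mul (h k)

theorem dom_one_add (s : ℕ) : Dom (1 + X ^ (1 + s)) (1 + X ^ (3 + s)) :=
  ⟨NNeg.one.add (NNeg.X_pow _), NNeg.one.add (NNeg.X_pow _), X ^ (1 + s), NNeg.X_pow _, by ring⟩

theorem dom_geo (s : ℕ) : Dom (geo (1 + s)) (geo (3 + s)) := by
  have h1 : 0 < 1 + s := by omega
  have h3 : 0 < 3 + s := by omega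
  refine ⟨geo_nneg h1, geo_nneg h3, X ^ (1 + s) * (geo (1 + s) * geo (3 + s)),
    (NNeg.X_pow _).mul ((geo_nneg h1).mul (geo_nneg h3)), ?_⟩
  have e1 := geo_mul h1
  have e3 := geo_mul h3
  linear_combination geo (3 + s) * e1 - geo (1 + s) * e3

theorem split_prod (f : ℕ → PowerSeries ℚ) (L : ℕ) :
    ∏ j ∈ Finset.range L, (f (2 * j) * f (2 * j + 1)) =
      (∏ j ∈ Finset.range L, f j) * ∏ j ∈ Finset.range L, f (L + j) := by
  rw [← Finset.prod_range_add, ← two_mul]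
  induction L with
  | zero => simp
  | succ k ih =>
    rw [Finset.prod_range_succ, ih, show 2 * (k + 1) = 2 * k + 1 + 1 by ring,
      Finset.prod_range_succ, Finset.prod_range_succ, mul_assoc]

noncomputable def GG (c L : ℕ) : PowerSeries ℚ :=
  (∏ j ∈ Finset.range L, (1 + X ^ (c + 4 * j))) *
    ∏ j ∈ Finset.range L, geo (c + 4 * (L + j))

noncomputable def HH (c L : ℕ) : PowerSeries ℚ := ∏ j ∈ Finset.range L, geo (c + 8 * j)

theorem GG_key {c : ℕ} (hc : 0 < c) (L : ℕ) :
    (∏ j ∈ Finset.range L, ((1 - (X : PowerSeries ℚ) ^ (c + 8 * j)) *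
      (1 - X ^ (c + 4 + 8 * j)))) * (GG c L * HH (2 * c) L) = 1 := by
  have h := split_prod (fun j => 1 - (X : PowerSeries ℚ) ^ (c + 4 * j)) L
  have e : ∀ j, (1 - (X : PowerSeries ℚ) ^ (c + 8 * j)) * (1 - X ^ (c + 4 + 8 * j)) =
      (1 - X ^ (c + 4 * (2 * j))) * (1 - X ^ (c + 4 * (2 * j + 1))) := by
    intro j; ring
  simp only [e]
  rw [h, GG, HH]
  simp only [← Finset.prod_mul_distrib]
  apply Finset.prod_eq_one
  intro j _
  have e1 := geo_mul (a := c + 4 * (L + j)) (by omega)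
  have e2 := geo_mul (a := 2 * c + 8 * j) (by omega)
  have e3 : (X : PowerSeries ℚ) ^ (2 * c + 8 * j) = X ^ (c + 4 * j) * X ^ (c + 4 * j) := by ring
  rw [e3] at e2
  generalize (X : PowerSeries ℚ) ^ (c + 4 * j) = x at *
  generalize (X : PowerSeries ℚ) ^ (c + 4 * (L + j)) = y at *
  generalize geo (c + 4 * (L + j)) = u at *
  generalize geo (2 * c + 8 * j) = v at *
  linear_combination (1 - x * x) * v * e1 + e2

theorem HH_key {c : ℕ} (hc : 0 < c) (L : ℕ) :
    (∏ j ∈ Finset.range L, (1 - (X : PowerSeries ℚ) ^ (c + 8 * j))) * HH c L = 1 := by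
  rw [HH, ← Finset.prod_mul_distrib]
  exact Finset.prod_eq_one fun j _ => geo_mul (by omega)

theorem inv_eq_of_mul {A B : PowerSeries ℚ} (h : A * B = 1) : A⁻¹ = B := by
  have hA : constantCoeff A ≠ 0 := by
    intro h0
    have := congrArg (constantCoeff (R := ℚ)) h
    simp [h0] at this
  rw [PowerSeries.inv_eq_iff_mul_eq_one hA, mul_comm, h]

theorem HH_nneg {c : ℕ} (hc : 0 < c) (L : ℕ) : NNeg (HH c L) :=
  NNeg.prod L fun j => geo_nneg (by omega)

theorem HH_two (M : ℕ) : NNeg ((1 - X ^ 2) * HH 2 (M + 1)) := by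
  have e : (1 - X ^ 2) * HH 2 (M + 1) = ∏ j ∈ Finset.range M, geo (2 + 8 * (j + 1)) := by
    rw [HH, Finset.prod_range_succ']
    have := geo_mul (a := 2 + 8 * 0) (by omega)
    rw [show (X : PowerSeries ℚ) ^ (2 + 8 * 0) = X ^ 2 by rfl] at this
    linear_combination (∏ j ∈ Finset.range M, geo (2 + 8 * (j + 1))) * this
  rw [e]
  exact NNeg.prod M fun j => geo_nneg (by omega)

theorem andrews_finite_little_gollnitz (L : ℕ) (hL : 0 < L) (n : ℕ) :
    0 ≤ PowerSeries.coeff (R := ℚ) n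
      ((∏ j ∈ Finset.range L,
          (1 - (PowerSeries.X : PowerSeries ℚ) ^ (1 + 8 * j)) *
          ((1 - (PowerSeries.X : PowerSeries ℚ) ^ (5 + 8 * j)) *
           (1 - (PowerSeries.X : PowerSeries ℚ) ^ (6 + 8 * j))))⁻¹ -
       (∏ j ∈ Finset.range L,
          (1 - (PowerSeries.X : PowerSeries ℚ) ^ (2 + 8 * j)) *
          ((1 - (PowerSeries.X : PowerSeries ℚ) ^ (3 + 8 * j)) *
           (1 - (PowerSeries.X : PowerSeries ℚ) ^ (7 + 8 * j))))⁻¹) := by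
  obtain ⟨M, rfl⟩ : ∃ M, L = M + 1 := ⟨L - 1, by omega⟩
  have g1 := GG_key (c := 1) (by norm_num) (M + 1)
  have g3 := GG_key (c := 3) (by norm_num) (M + 1)
  have h6 := HH_key (c := 6) (by norm_num) (M + 1)
  have h2 := HH_key (c := 2) (by norm_num) (M + 1)
  norm_num only at g1 g3
  rw [Finset.prod_mul_distrib] at g1 g3
  have d : Dom (GG 1 (M + 1)) (GG 3 (M + 1)) :=
    (Dom.prod _ fun j => dom_one_add _).mul (Dom.prod _ fun j => dom_geo _)
  obtain ⟨-, -, C, hC, e⟩ := d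
  simp only [Finset.prod_mul_distrib]
  rw [inv_eq_of_mul (B := GG 1 (M + 1) * HH 2 (M + 1) * HH 6 (M + 1)),
    inv_eq_of_mul (B := GG 3 (M + 1) * HH 6 (M + 1) * HH 2 (M + 1))]
  · have e' : GG 1 (M + 1) * HH 2 (M + 1) * HH 6 (M + 1) -
        GG 3 (M + 1) * HH 6 (M + 1) * HH 2 (M + 1) =
        C * (((1 - X ^ 2) * HH 2 (M + 1)) * HH 6 (M + 1)) := by
      linear_combination HH 2 (M + 1) * HH 6 (M + 1) * e
    rw [e']
    exact hC.mul ((HH_two M).mul (HH_nneg (by norm_num) _)) n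
  · have m := congrArg₂ (fun a b : PowerSeries ℚ => a * b) g3 h2
    simp only [mul_one] at m
    refine Eq.trans ?_ m
    ac_rfl
  · have m := congrArg₂ (fun a b : PowerSeries ℚ => a * b) g1 h6
    simp only [mul_one] at m
    refine Eq.trans ?_ m
    ac_rfl
end
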